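/- arXiv:1406.1089 — 2 statements merged into one kernel-verified Lean document; each statement's English description precedes it below -/
import Mathlib

section
/- Let E and F be real inner product spaces, and let C₁ ⊆ E and C₂ ⊆ F be nonempty bounded convex sets containing the origin. Equip E × F with the inner product ⟨(x, y), (z₁, z₂)⟩ = ⟨x, z₁⟩ + ⟨y, z₂⟩. Then for every z₁ ∈ E and z₂ ∈ F, the gauge of the polar of the product set satisfies γ_{(C₁ × C₂)°}(z₁, z₂) = γ_{C₁°}(z₁) + γ_{C₂°}(z₂). -/
open RealInnerProductSpace

/-!
The gauge of the polar `C°` is the support function of `C`: for `r > 0` one has `z ∈ r • C°` iff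
`⟪x, z⟫ ≤ r` for all `x ∈ C`, so `γ_{C°}(z) = sup_{x ∈ C} ⟪x, z⟫`, the supremum being nonnegative
as `0 ∈ C` and finite as `C` is bounded (`gauge_eq_of_isLUB`, `isLUB_gauge_polar`). The supremum of
`⟪x, z₁⟫ + ⟪y, z₂⟫` over `(x, y) ∈ C₁ × C₂` is the sum of the separate suprema.
-/

/-- The gauge of a set cut out by inequalities `φ i v ≤ 1` is the supremum of the `φ i`, when this
supremum at the given point is finite and nonnegative. Stated for an arbitrary family rather than
for inner products, so that it applies to `E × F`, which carries no inner product instance. -/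
lemma gauge_eq_of_isLUB {ι V : Type*} [AddCommGroup V] [Module ℝ V]
    (φ : ι → V → ℝ) (I : Set ι) (z : V) (s : ℝ)
    (hφ : ∀ i ∈ I, ∀ r : ℝ, φ i (r • z) = r * φ i z)
    (hs : IsLUB ((fun i => φ i z) '' I) s) (h0 : 0 ≤ s) :
    gauge {v : V | ∀ i ∈ I, φ i v ≤ 1} z = s := by
  have key : ∀ r : ℝ, 0 < r → (r⁻¹ • z ∈ {v : V | ∀ i ∈ I, φ i v ≤ 1} ↔ s ≤ r) := by
    intro r hr
    rw [isLUB_le_iff hs, mem_upperBounds, Set.forall_mem_image]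
    refine forall₂_congr fun i hi => ?_
    rw [hφ i hi, inv_mul_le_iff₀ hr, mul_one]
  rw [gauge_def']
  apply le_antisymm
  · refine le_of_forall_pos_le_add fun ε hε => ?_
    have hpos : 0 < s + ε := by linarith
    exact csInf_le ⟨0, fun r hr => le_of_lt hr.1⟩ ⟨hpos, (key _ hpos).2 (by linarith)⟩
  · have hpos : 0 < s + 1 := by linarith
    exact le_csInf ⟨s + 1, hpos, (key _ hpos).2 (by linarith)⟩
      fun r hr => (key r hr.1).1 hr.2

/-- The gauge of the polar of a bounded set containing the origin is its support function. -/
lemma isLUB_gauge_polar {E : Type*} [NormedAddCommGroup E] [InnerProductSpace ℝ E]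
    (C : Set E) (hbdd : Bornology.IsBounded C) (h0 : (0 : E) ∈ C) (z : E) :
    IsLUB ((fun x : E => ⟪x, z⟫) '' C) (gauge {v : E | ∀ x ∈ C, ⟪x, v⟫ ≤ 1} z) := by
  obtain ⟨R, hR⟩ := hbdd.exists_norm_le
  have hlub : IsLUB ((fun x : E => ⟪x, z⟫) '' C) (sSup ((fun x : E => ⟪x, z⟫) '' C)) := by
    refine isLUB_csSup ⟨_, Set.mem_image_of_mem _ h0⟩ ⟨R * ‖z‖, ?_⟩
    rintro _ ⟨x, hx, rfl⟩
    exact (real_inner_le_norm x z).trans (mul_le_mul_of_nonneg_right (hR x hx) (norm_nonneg z))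
  have hnn : 0 ≤ sSup ((fun x : E => ⟪x, z⟫) '' C) := hlub.1 ⟨0, h0, inner_zero_left z⟩
  rwa [gauge_eq_of_isLUB (fun x v : E => ⟪x, v⟫) C z _
    (fun x _ r => real_inner_smul_right x z r) hlub hnn]

/-- **Gauge of the polar of a product set.**
For nonempty bounded convex sets `C₁ ⊆ E`, `C₂ ⊆ F` containing the origin,
with `E × F` carrying the inner product `⟪(x, y), (z₁, z₂)⟫ = ⟪x, z₁⟫ + ⟪y, z₂⟫`,
the gauge of the polar of the product set is the sum of the gauges of the polars. -/
theorem gauge_polar_prod_eq_add {E F : Type*}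
    [NormedAddCommGroup E] [InnerProductSpace ℝ E]
    [NormedAddCommGroup F] [InnerProductSpace ℝ F]
    (C₁ : Set E) (C₂ : Set F)
    (hne₁ : C₁.Nonempty) (hne₂ : C₂.Nonempty)
    (hbdd₁ : Bornology.IsBounded C₁) (hbdd₂ : Bornology.IsBounded C₂)
    (hconv₁ : Convex ℝ C₁) (hconv₂ : Convex ℝ C₂)
    (h0₁ : (0 : E) ∈ C₁) (h0₂ : (0 : F) ∈ C₂)
    (z₁ : E) (z₂ : F) :
    gauge {p : E × F | ∀ q ∈ C₁ ×ˢ C₂, ⟪q.1, p.1⟫ + ⟪q.2, p.2⟫ ≤ 1} (z₁, z₂)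
      = gauge {v : E | ∀ x ∈ C₁, ⟪x, v⟫ ≤ 1} z₁
        + gauge {v : F | ∀ y ∈ C₂, ⟪y, v⟫ ≤ 1} z₂ := by
  refine gauge_eq_of_isLUB (fun (q p : E × F) => ⟪q.1, p.1⟫ + ⟪q.2, p.2⟫) (C₁ ×ˢ C₂) (z₁, z₂) _
    ?_ ?_ (add_nonneg (gauge_nonneg _) (gauge_nonneg _))
  · intro q _ r
    simp only [Prod.smul_mk, real_inner_smul_right, mul_add]
  · have h := (isLUB_gauge_polar C₁ hbdd₁ h0₁ z₁).add (isLUB_gauge_polar C₂ hbdd₂ h0₂ z₂)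
    rwa [← Set.image2_add, Set.image2_image_left, Set.image2_image_right,
      ← Set.image_prod] at h
end

section
/- Let α ∈ ℝ^d have strictly positive entries α_i > 0, let x ∈ ℝ^d satisfy Σ_{i=1}^d α_i |x_i| > 1, and let K = { y ∈ ℝ^d : Σ_{i=1}^d α_i |y_i| ≤ 1 }, a nonempty closed convex set. Then the Euclidean projection p of x onto K is characterized by a single scalar parameter: there exists λ > 0 such that for every index i, p_i = sign(x_i) · max(|x_i| − λ α_i, 0), and moreover Σ_{i=1}^d α_i |p_i| = 1. -/
/-!
For `t ≥ 0` the function `t ↦ ∑ αᵢ max (|xᵢ| - t αᵢ) 0` is continuous, exceeds `1` at `t = 0` and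
vanishes for large `t`, so it equals `1` at some `lam > 0`. Let `q` be the corresponding
soft-thresholding of `x`. Since `(xᵢ - qᵢ) / lam` is a subgradient of `αᵢ |·|` at `qᵢ`, summing the
subgradient inequality over `i` gives `‖x - q‖² + ‖q - y‖² ≤ ‖x - y‖²` for every `y` in the scaled
ball. With `y = p` and minimality of `p` this forces `p = q`.
-/

open Finset

lemma abs_sign_mul_max {x c : ℝ} (hc : 0 ≤ c) :
    |Real.sign x * max (|x| - c) 0| = max (|x| - c) 0 := by
  rcases eq_or_ne x 0 with rfl | h
  · simp [hc]
  · rw [abs_mul, abs_of_nonneg (le_max_right (|x| - c) 0)]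
    rcases Real.sign_apply_eq_of_ne_zero x h with h | h <;> simp [h]

/-- Subgradient inequality for `c |·|` at the soft-thresholding `q` of `x`, written in terms of
squared distances. -/
lemma soft_threshold_ineq {x y c q : ℝ} (hc : 0 ≤ c)
    (hq : q = Real.sign x * max (|x| - c) 0) :
    (x - q) ^ 2 + (q - y) ^ 2 + 2 * (c * |q| - c * |y|) ≤ (x - y) ^ 2 := by
  -- The residual `x - q` lies in `[-c, c]` and has full size `c`, with the sign of `q`, off `q = 0`.
  have key : |x - q| ≤ c ∧ (x - q) * q = c * |q| := by
    have habs : |q| = max (|x| - c) 0 := hq ▸ abs_sign_mul_max hc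
    rw [habs]
    rcases le_total (|x| - c) 0 with h | h
    · rw [max_eq_right h] at hq ⊢
      simp only [mul_zero] at hq
      subst hq
      simpa using h
    · rw [max_eq_left h] at hq ⊢
      rcases lt_trichotomy x 0 with hx | rfl | hx
      · rw [Real.sign_of_neg hx, abs_of_neg hx] at hq
        rw [abs_of_neg hx, show x - q = -c by linarith, abs_neg, abs_of_nonneg hc, hq]
        exact ⟨le_rfl, by ring⟩
      · have : c = 0 := by simp at h; linarith
        subst this
        simp at hq
        simp [hq]
      · rw [Real.sign_of_pos hx, abs_of_pos hx] at hq
        rw [abs_of_pos hx, show x - q = c by linarith, abs_of_nonneg hc, hq]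
        exact ⟨le_rfl, by ring⟩
  have h1 : (x - q) * y ≤ c * |y| :=
    (le_abs_self _).trans (by rw [abs_mul]; exact mul_le_mul_of_nonneg_right key.1 (abs_nonneg y))
  nlinarith [key.2]

lemma exists_threshold {d : ℕ} (α : Fin d → ℝ) (hα : ∀ i, 0 < α i) (x : Fin d → ℝ)
    (hx : 1 < ∑ i, α i * |x i|) :
    ∃ lam : ℝ, 0 < lam ∧ ∑ i, α i * max (|x i| - lam * α i) 0 = 1 := by
  have hnn : ∀ i, 0 ≤ |x i| / α i := fun i => div_nonneg (abs_nonneg _) (hα i).le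
  -- At `t = ∑ |xᵢ| / αᵢ` every coordinate is thresholded to zero.
  have hM : ∑ i, α i * max (|x i| - (∑ j, |x j| / α j) * α i) 0 = 0 := by
    refine Finset.sum_eq_zero fun i _ => ?_
    have h := Finset.single_le_sum (fun j _ => hnn j) (Finset.mem_univ i)
    rw [div_le_iff₀ (hα i)] at h
    rw [max_eq_right (by linarith), mul_zero]
  have h0 : ∑ i, α i * max (|x i| - 0 * α i) 0 = ∑ i, α i * |x i| := by simp
  have hcont : Continuous fun t : ℝ => ∑ i, α i * max (|x i| - t * α i) 0 := by fun_prop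
  obtain ⟨t, ht, hgt⟩ := intermediate_value_Icc' (Finset.sum_nonneg fun i _ => hnn i)
    hcont.continuousOn ⟨hM.trans_le zero_le_one, hx.le.trans h0.ge⟩
  refine ⟨t, lt_of_le_of_ne ht.1 ?_, hgt⟩
  rintro rfl
  exact hx.ne' (h0.symm.trans hgt)

/-- **Projection onto the scaled ℓ₁-ball is soft-thresholding, characterized by a
single scalar parameter.** If `Σ αᵢ |xᵢ| > 1` with all `αᵢ > 0`, and `p` is the
Euclidean projection of `x` onto `K = {y | Σ αᵢ |yᵢ| ≤ 1}`, then there is a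
`λ > 0` with `pᵢ = sign(xᵢ) · max(|xᵢ| − λ αᵢ, 0)` for all `i`, and the
constraint is tight at `p`. -/
theorem proj_scaled_l1_ball_soft_threshold {d : ℕ}
    (α : Fin d → ℝ) (hα : ∀ i, 0 < α i)
    (x : EuclideanSpace ℝ (Fin d)) (hx : 1 < ∑ i, α i * |x i|)
    (p : EuclideanSpace ℝ (Fin d))
    (hpK : ∑ i, α i * |p i| ≤ 1)
    (hmin : ∀ y : EuclideanSpace ℝ (Fin d),
      (∑ i, α i * |y i| ≤ 1) → ‖x - p‖ ≤ ‖x - y‖) :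
    ∃ lam : ℝ, 0 < lam ∧
      (∀ i, p i = Real.sign (x i) * max (|x i| - lam * α i) 0) ∧
      ∑ i, α i * |p i| = 1 := by
  obtain ⟨lam, hlam, hsum⟩ := exists_threshold α hα x hx
  have hc : ∀ i, 0 ≤ lam * α i := fun i => (mul_pos hlam (hα i)).le
  obtain ⟨q, hq⟩ : ∃ q : EuclideanSpace ℝ (Fin d),
      ∀ i, q i = Real.sign (x i) * max (|x i| - lam * α i) 0 :=
    ⟨WithLp.toLp 2 fun i => Real.sign (x i) * max (|x i| - lam * α i) 0, fun _ => rfl⟩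
  have hqK : ∑ i, α i * |q i| = 1 := by
    rw [← hsum]
    exact Finset.sum_congr rfl fun i _ => by rw [hq i, abs_sign_mul_max (hc i)]
  have hpyth : ‖x - q‖ ^ 2 + ‖q - p‖ ^ 2
      + 2 * (lam * ∑ i, α i * |q i| - lam * ∑ i, α i * |p i|) ≤ ‖x - p‖ ^ 2 := by
    have h := Finset.sum_le_sum fun i (_ : i ∈ Finset.univ) =>
      soft_threshold_ineq (y := p i) (hc i) (hq i)
    simpa only [EuclideanSpace.real_norm_sq_eq, PiLp.sub_apply, Finset.mul_sum,
      Finset.sum_add_distrib, Finset.sum_sub_distrib, mul_sub, mul_assoc] using h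
  have hle : ‖x - p‖ ^ 2 ≤ ‖x - q‖ ^ 2 := by
    gcongr
    exact hmin q hqK.le
  have hlp : lam * ∑ i, α i * |p i| ≤ lam * 1 := mul_le_mul_of_nonneg_left hpK hlam.le
  rw [hqK] at hpyth
  have hz : ‖q - p‖ = 0 := by
    rw [← sq_eq_zero_iff]
    exact le_antisymm (by linarith) (sq_nonneg _)
  obtain rfl : q = p := sub_eq_zero.mp (norm_eq_zero.mp hz)
  exact ⟨lam, hlam, hq, hqK⟩
end
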